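/- Fix an integer m ≥ 2 and M = {M_β}_{|β|≤m} ⊆ ℂ. For each δ > 0, there is a complex Borel measure μ_{1/δ} on ℝ^d (given by the density which is the inverse Fourier transform of φ_δ) whose Fourier transform equals φ_δ, which has finite absolute moments of order m, and which satisfies ∫ x^β dμ_{1/δ}(x) = M_β for every multi-index β with |β| ≤ m; in particular μ_{1/δ} ∈ 𝓜_m^M. -/

import Mathlib

open MeasureTheory Filter Topology
open scoped ENNReal NNReal

noncomputable section
open scoped Classical


abbrev Vd (d : ℕ) := EuclideanSpace ℝ (Fin d)

/-- The total variation measure `|μ|` of a complex measure (realized as the sum of the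
total variations of its real and imaginary parts). -/
def ctv {d : ℕ} (μ : ComplexMeasure (Vd d)) : Measure (Vd d) :=
  μ.re.totalVariation + μ.im.totalVariation

/-- Integral of a complex-valued function against a complex measure. -/
def cint {d : ℕ} (μ : ComplexMeasure (Vd d)) (f : Vd d → ℂ) : ℂ :=
  ((∫ x, f x ∂μ.re.toJordanDecomposition.posPart) -
    (∫ x, f x ∂μ.re.toJordanDecomposition.negPart)) +
  Complex.I * ((∫ x, f x ∂μ.im.toJordanDecomposition.posPart) -
    (∫ x, f x ∂μ.im.toJordanDecomposition.negPart))

/-- The Fourier transform `μ̂(ξ) = ∫ e^{-i x·ξ} dμ(x)` of a complex measure. -/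
def ftc {d : ℕ} (μ : ComplexMeasure (Vd d)) (ξ : Vd d) : ℂ :=
  cint μ (fun x => Complex.exp (-(Complex.I) * ((∑ i, x i * ξ i : ℝ) : ℂ)))

/-- The Fourier-based distance `d_m(μ,ν) = sup_{ξ ≠ 0} |μ̂(ξ)-ν̂(ξ)|/|ξ|^m` (valued in `ℝ≥0∞`). -/
def dm {d : ℕ} (m : ℕ) (μ ν : ComplexMeasure (Vd d)) : ℝ≥0∞ :=
  ⨆ ξ : {ξ : Vd d // ξ ≠ 0}, ENNReal.ofReal (‖ftc μ ξ - ftc ν ξ‖ / ‖(ξ : Vd d)‖ ^ m)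

/-- The finite set of multi-indices `β ∈ ℕ^d` with `|β| ≤ m`. -/
def multiIdx (d m : ℕ) : Finset (Fin d → ℕ) :=
  (Fintype.piFinset fun _ : Fin d => Finset.range (m + 1)).filter fun γ => ∑ i, γ i ≤ m

/-- The set `𝓜_m^M` of complex measures with finite `m`-th absolute moment and
moments prescribed by `M`. -/
def MomentSet (d m : ℕ) (M : (Fin d → ℕ) → ℂ) : Set (ComplexMeasure (Vd d)) :=
  {μ | (∫⁻ x, (‖x‖₊ : ℝ≥0∞) ^ m ∂(ctv μ)) < ⊤ ∧
       ∀ β : Fin d → ℕ, (∑ i, β i) ≤ m →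
         cint μ (fun x => ∏ i, ((x i : ℂ)) ^ (β i)) = M β}

/-- The polynomial `P(ξ) = Σ_{|γ|≤m} (M_γ/γ!) (-iξ)^γ`. -/
def Ppoly (d m : ℕ) (M : (Fin d → ℕ) → ℂ) (ξ : Vd d) : ℂ :=
  ∑ γ ∈ multiIdx d m,
    (M γ / ∏ i, (Nat.factorial (γ i) : ℂ)) * ∏ i, (-(Complex.I) * (ξ i)) ^ (γ i)

/-- The function `φ_δ`. -/
def phiFun (d m : ℕ) (M : (Fin d → ℕ) → ℂ) (δ : ℝ) (ξ : Vd d) : ℂ :=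
  if ξ = 0 then Ppoly d m M 0
  else (Ppoly d m M ξ +
      ((‖ξ‖ ^ (m + 2) * Real.sin (1 / ‖ξ‖ ^ m) * Real.exp (-δ / ‖ξ‖ ^ 2) : ℝ) : ℂ)) *
    ((Real.exp (-‖ξ‖ ^ (2 * m)) : ℝ) : ℂ)

/-- The function `f_δ`. -/
def fdelta (d m : ℕ) (δ : ℝ) (ξ : Vd d) : ℝ :=
  if ξ = 0 then 0
  else ‖ξ‖ ^ (m + 2) * Real.sin (1 / ‖ξ‖ ^ m) * Real.exp (-δ / ‖ξ‖ ^ 2)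

/-- First-order partial derivative in the `i`-th coordinate direction. -/
def pderiv1 {d : ℕ} {F : Type*} [NormedAddCommGroup F] [NormedSpace ℝ F]
    (i : Fin d) (f : Vd d → F) : Vd d → F :=
  fun ξ => fderiv ℝ f ξ (EuclideanSpace.single i 1)

/-- The multi-index partial derivative `D^β = ∂_{ξ_1}^{β_1} ⋯ ∂_{ξ_d}^{β_d}`. -/
def Dmulti {d : ℕ} {F : Type*} [NormedAddCommGroup F] [NormedSpace ℝ F]
    (β : Fin d → ℕ) (f : Vd d → F) : Vd d → F :=
  (List.ofFn fun i : Fin d => (pderiv1 i)^[β i]).foldr (fun op g => op g) f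

/-!
The function `f_δ` is the imaginary part of `s ^ a * exp (-δ / s + i s ^ (-b))` at `s = ‖ξ‖ ^ 2`.
Derivatives of such a function of `s` are linear combinations of functions of the same kind, and
the factor `exp (-δ / s)` makes all of them flat at `s = 0`, so `f_δ` is smooth of temperate growth.
Hence `φ_δ`, which is `P + f_δ` times a Schwartz function, is Schwartz, and Fourier inversion gives
a Schwartz density with Fourier transform `φ_δ`.

Its moments are read off at the origin: the Fourier transform of a density differs from the
polynomial `P` built on the moments of that density by `O(|ξ| ^ (m + 1))`, whereas `φ_δ` differs
from the polynomial built on `M` by `o(|ξ| ^ m)`, and a polynomial of degree at most `m` which is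
`o(|ξ| ^ m)` vanishes.
-/

open scoped FourierTransform SchwartzMap ContDiff

section TemperateGrowth

lemma exists_isBigO_one_add_norm_pow_of_mem_span {𝕜 ι E F : Type*} [NormedField 𝕜]
    [NormedAddCommGroup E] [NormedAddCommGroup F] [NormedSpace 𝕜 F] {f : ι → E → F}
    (hf : ∀ i, ∃ k : ℕ, f i =O[⊤] fun x => (1 + ‖x‖) ^ k) {g : E → F}
    (hg : g ∈ Submodule.span 𝕜 (Set.range f)) :
    ∃ k : ℕ, g =O[⊤] fun x => (1 + ‖x‖) ^ k := by
  have hone : 1 ≤ᶠ[⊤] fun x : E => 1 + ‖x‖ := .of_forall fun x => by simp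
  induction hg using Submodule.span_induction with
  | mem _ hg => obtain ⟨i, rfl⟩ := hg; exact hf i
  | zero => exact ⟨0, Asymptotics.isBigO_zero _ _⟩
  | add g h _ _ hg hh =>
    obtain ⟨k, hg⟩ := hg
    obtain ⟨l, hh⟩ := hh
    exact ⟨max k l, (hg.trans (.pow_of_le_right hone (le_max_left k l))).add
      (hh.trans (.pow_of_le_right hone (le_max_right k l)))⟩
  | smul z g _ hg =>
    obtain ⟨k, hg⟩ := hg
    exact ⟨k, hg.const_smul_left z⟩

variable {E F : Type*} [NormedAddCommGroup E] [NormedSpace ℝ E]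
  [NormedAddCommGroup F] [NormedSpace ℝ F]

lemma hasTemperateGrowth_of_deriv_mem {S : Set (ℝ → F)}
    (hdiff : ∀ f ∈ S, Differentiable ℝ f) (hderiv : ∀ f ∈ S, deriv f ∈ S)
    (hgrowth : ∀ f ∈ S, ∃ k : ℕ, f =O[⊤] fun s => (1 + ‖s‖) ^ k)
    {f : ℝ → F} (hf : f ∈ S) : f.HasTemperateGrowth := by
  have hiter (n : ℕ) : iteratedDeriv n f ∈ S := by
    induction n with
    | zero => rwa [iteratedDeriv_zero]
    | succ n ih => rw [iteratedDeriv_succ]; exact hderiv _ ih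
  refine Function.hasTemperateGrowth_iff_isBigO.2
    ⟨contDiff_of_differentiable_iteratedDeriv fun n _ => hdiff _ (hiter n), fun n => ?_⟩
  obtain ⟨k, hk⟩ := hgrowth _ (hiter n)
  exact ⟨k, .of_norm_left <| hk.norm_left.congr_left fun s =>
    (norm_iteratedFDeriv_eq_norm_iteratedDeriv (𝕜 := ℝ)).symm⟩

lemma hasTemperateGrowth_of_deriv_mem_span {𝕜 ι : Type*} [NormedField 𝕜] [NormedSpace 𝕜 F]
    [SMulCommClass ℝ 𝕜 F] {f : ι → ℝ → F} (hdiff : ∀ i, Differentiable ℝ (f i))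
    (hderiv : ∀ i, deriv (f i) ∈ Submodule.span 𝕜 (Set.range f))
    (hgrowth : ∀ i, ∃ k : ℕ, f i =O[⊤] fun s => (1 + ‖s‖) ^ k) (i : ι) :
    (f i).HasTemperateGrowth := by
  set S : Submodule 𝕜 (ℝ → F) := Submodule.span 𝕜 (Set.range f)
  have hdiffS (g) (hg : g ∈ S) : Differentiable ℝ g := by
    induction hg using Submodule.span_induction with
    | mem _ hg => obtain ⟨j, rfl⟩ := hg; exact hdiff j
    | zero => exact differentiable_const 0
    | add g h _ _ hg hh => exact hg.add hh
    | smul z g _ hg => exact hg.const_smul z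
  have hderivS (g) (hg : g ∈ S) : deriv g ∈ S := by
    induction hg using Submodule.span_induction with
    | mem _ hg => obtain ⟨j, rfl⟩ := hg; exact hderiv j
    | zero => simpa only [deriv_zero] using S.zero_mem
    | add g h hg hh hg' hh' =>
      have hadd : deriv (g + h) = deriv g + deriv h :=
        funext fun s => deriv_add (hdiffS g hg s) (hdiffS h hh s)
      exact hadd ▸ S.add_mem hg' hh'
    | smul z g hg hg' =>
      have hsmul : deriv (z • g) = z • deriv g :=
        funext fun s => deriv_const_smul z (hdiffS g hg s)
      exact hsmul ▸ S.smul_mem z hg'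
  exact hasTemperateGrowth_of_deriv_mem hdiffS hderivS
    (fun g => exists_isBigO_one_add_norm_pow_of_mem_span hgrowth) (Submodule.subset_span ⟨i, rfl⟩)

lemma exists_norm_iteratedFDeriv_exp_neg_le {g : E → ℝ} (hg : g.HasTemperateGrowth) (n : ℕ) :
    ∃ (k : ℕ) (C : ℝ), 0 ≤ C ∧ ∀ x,
      ‖iteratedFDeriv ℝ n (fun y => Real.exp (-g y)) x‖ ≤
        C * ((1 + ‖x‖) ^ k * Real.exp (-g x)) := by
  obtain ⟨k, C, hC, hgC⟩ := hg.neg.norm_iteratedFDeriv_le_uniform n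
  refine ⟨k * n, n.factorial * (1 + C) ^ n, by positivity, fun x => ?_⟩
  have hx := norm_nonneg x
  have hone : 1 ≤ (1 + C) * (1 + ‖x‖) ^ k :=
    one_le_mul_of_one_le_of_one_le (by linarith) (one_le_pow₀ (by linarith))
  have hexp (i : ℕ) (_ : i ≤ n) :
      ‖iteratedFDeriv ℝ i Real.exp ((-g) x)‖ ≤ Real.exp (-g x) := by
    rw [norm_iteratedFDeriv_eq_norm_iteratedDeriv, iteratedDeriv_eq_iterate, Real.iter_deriv_exp]
    simp
  have hinner (i : ℕ) (hi : 1 ≤ i) (hin : i ≤ n) :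
      ‖iteratedFDeriv ℝ i (-g) x‖ ≤ ((1 + C) * (1 + ‖x‖) ^ k) ^ i :=
    calc ‖iteratedFDeriv ℝ i (-g) x‖ ≤ C * (1 + ‖x‖) ^ k := hgC i hin x
      _ ≤ (1 + C) * (1 + ‖x‖) ^ k := by gcongr; linarith
      _ ≤ _ := le_self_pow₀ hone (by lia)
  calc ‖iteratedFDeriv ℝ n (Real.exp ∘ (-g)) x‖
      ≤ n.factorial * Real.exp (-g x) * ((1 + C) * (1 + ‖x‖) ^ k) ^ n :=
        norm_iteratedFDeriv_comp_le Real.contDiff_exp hg.neg.1 (mod_cast le_top) x hexp hinner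
    _ = _ := by rw [mul_pow, pow_mul]; ring

lemma one_add_pow_mul_exp_neg_le {r s c : ℝ} (hr : 0 ≤ r) (h : r ≤ s + c) (k : ℕ) :
    (1 + r) ^ k * Real.exp (-s) ≤ k.factorial * Real.exp (1 + c) := by
  have hpow : (1 + r) ^ k ≤ Real.exp (1 + r) * k.factorial := by
    rw [← div_le_iff₀ (by positivity)]
    exact Real.pow_div_factorial_le_exp (1 + r) (by positivity) k
  calc (1 + r) ^ k * Real.exp (-s)
      ≤ Real.exp (1 + r) * k.factorial * Real.exp (c - r) := by gcongr; linarith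
    _ = k.factorial * (Real.exp (1 + r) * Real.exp (c - r)) := by ring
    _ = k.factorial * Real.exp (1 + c) := by rw [← Real.exp_add]; ring_nf

/-- The function `exp (-g)` as a Schwartz function, for a phase `g` of temperate growth which
grows at least linearly. -/
def expNegSchwartz {g : E → ℝ} (hg : g.HasTemperateGrowth) {c : ℝ} (hgc : ∀ x, ‖x‖ ≤ g x + c) :
    𝓢(E, ℝ) where
  toFun x := Real.exp (-g x)
  smooth' := Real.contDiff_exp.comp hg.neg.1
  decay' k n := by
    obtain ⟨l, C, hC, hbound⟩ := exists_norm_iteratedFDeriv_exp_neg_le hg n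
    refine ⟨C * ((k + l).factorial * Real.exp (1 + c)), fun x => ?_⟩
    calc ‖x‖ ^ k * ‖iteratedFDeriv ℝ n (fun y => Real.exp (-g y)) x‖
        ≤ (1 + ‖x‖) ^ k * (C * ((1 + ‖x‖) ^ l * Real.exp (-g x))) := by
          gcongr
          · linarith
          · exact hbound x
      _ = C * ((1 + ‖x‖) ^ (k + l) * Real.exp (-g x)) := by rw [pow_add]; ring
      _ ≤ _ := mul_le_mul_of_nonneg_left
          (one_add_pow_mul_exp_neg_le (norm_nonneg x) (hgc x) (k + l)) hC

lemma hasTemperateGrowth_prod {ι R : Type*} [NormedCommRing R] [NormedAlgebra ℝ R]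
    {f : ι → E → R} {s : Finset ι} (hf : ∀ i ∈ s, (f i).HasTemperateGrowth) :
    (fun x => ∏ i ∈ s, f i x).HasTemperateGrowth := by
  induction s using Finset.induction_on with
  | empty =>
    simpa only [Finset.prod_empty] using Function.HasTemperateGrowth.const (E := E) (1 : R)
  | insert i s hi ih =>
    simp only [Finset.prod_insert hi]
    exact (hf i (Finset.mem_insert_self i s)).mul
      (ih fun j hj => hf j (Finset.mem_insert_of_mem hj))

end TemperateGrowth

section OscPower

/-- The function `s ↦ s ^ a * exp (-δ / s + i s ^ (-b))` on `(0, ∞)`, extended by zero. The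
spans of these functions over all `a` are closed under differentiation, and the perturbation `f_δ`
is the imaginary part of one of them evaluated at `‖ξ‖ ^ 2`. -/
def oscPower (δ b a s : ℝ) : ℂ :=
  if 0 < s then
    ((s ^ a : ℝ) : ℂ) * Complex.exp (((-δ / s : ℝ) : ℂ) + Complex.I * ((s ^ (-b) : ℝ) : ℂ))
  else 0

variable {δ b a s : ℝ}

lemma oscPower_of_nonpos (hs : s ≤ 0) : oscPower δ b a s = 0 := if_neg hs.not_gt

lemma oscPower_of_pos (hs : 0 < s) :
    oscPower δ b a s =
      ((s ^ a : ℝ) : ℂ) * Complex.exp (((-δ / s : ℝ) : ℂ) + Complex.I * ((s ^ (-b) : ℝ) : ℂ)) :=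
  if_pos hs

lemma oscPower_add (hs : 0 < s) (c : ℝ) :
    oscPower δ b (a + c) s = ((s ^ c : ℝ) : ℂ) * oscPower δ b a s := by
  rw [oscPower_of_pos hs, oscPower_of_pos hs, Real.rpow_add hs, Complex.ofReal_mul]
  ring

lemma norm_oscPower_of_pos (hs : 0 < s) :
    ‖oscPower δ b a s‖ = s ^ a * Real.exp (-δ / s) := by
  rw [oscPower_of_pos hs, norm_mul, Complex.norm_real, Complex.norm_exp,
    Real.norm_of_nonneg (Real.rpow_nonneg hs.le a)]
  simp

lemma im_oscPower_of_pos (hs : 0 < s) :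
    (oscPower δ b a s).im = s ^ a * Real.sin (s ^ (-b)) * Real.exp (-δ / s) := by
  rw [oscPower_of_pos hs, Complex.im_ofReal_mul, mul_comm Complex.I, ← Complex.mk_eq_add_mul_I,
    Complex.exp_im, mul_right_comm, mul_assoc]

lemma rpow_le_pow_add_inv_pow {c : ℝ} {N : ℕ} (hs : 0 < s) (hN : |c| ≤ N) :
    s ^ c ≤ s ^ N + s⁻¹ ^ N := by
  obtain ⟨hNc, hcN⟩ := abs_le.1 hN
  rcases le_total 1 s with h | h
  · calc s ^ c ≤ s ^ (N : ℝ) := Real.rpow_le_rpow_of_exponent_le h hcN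
      _ = s ^ N := Real.rpow_natCast s N
      _ ≤ _ := le_add_of_nonneg_right (by positivity)
  · calc s ^ c ≤ s ^ (-(N : ℝ)) := Real.rpow_le_rpow_of_exponent_ge hs h hNc
      _ = s⁻¹ ^ N := by rw [Real.rpow_neg hs.le, Real.rpow_natCast, inv_pow]
      _ ≤ _ := le_add_of_nonneg_left (by positivity)

lemma inv_pow_mul_exp_neg_div_le (hδ : 0 < δ) (hs : 0 < s) (N : ℕ) :
    s⁻¹ ^ N * Real.exp (-δ / s) ≤ N.factorial * δ⁻¹ ^ N := by
  have hpow : (δ / s) ^ N ≤ Real.exp (δ / s) * N.factorial := by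
    rw [← div_le_iff₀ (by positivity)]
    exact Real.pow_div_factorial_le_exp (δ / s) (by positivity) N
  calc s⁻¹ ^ N * Real.exp (-δ / s)
      = (δ / s) ^ N * δ⁻¹ ^ N * Real.exp (-δ / s) := by
        rw [← mul_pow]; congr 2; field_simp
    _ ≤ Real.exp (δ / s) * N.factorial * δ⁻¹ ^ N * Real.exp (-δ / s) := by gcongr
    _ = N.factorial * δ⁻¹ ^ N * (Real.exp (δ / s) * Real.exp (-δ / s)) := by ring
    _ = N.factorial * δ⁻¹ ^ N := by rw [← Real.exp_add]; simp [neg_div]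

lemma exists_norm_oscPower_le (hδ : 0 < δ) (b a : ℝ) :
    ∃ (k : ℕ) (C : ℝ), ∀ s, ‖oscPower δ b a s‖ ≤ C * (1 + ‖s‖) ^ k := by
  obtain ⟨N, hN⟩ := exists_nat_ge |a|
  refine ⟨N, 1 + N.factorial * δ⁻¹ ^ N, fun s => ?_⟩
  rcases le_or_gt s 0 with hs | hs
  · rw [oscPower_of_nonpos hs, norm_zero]
    positivity
  have hone : 1 ≤ (1 + s) ^ N := one_le_pow₀ (by linarith)
  have hexp : Real.exp (-δ / s) ≤ 1 :=
    Real.exp_le_one_iff.2 (div_nonpos_of_nonpos_of_nonneg (by linarith) hs.le)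
  rw [norm_oscPower_of_pos hs, Real.norm_of_nonneg hs.le]
  calc s ^ a * Real.exp (-δ / s) ≤ (s ^ N + s⁻¹ ^ N) * Real.exp (-δ / s) := by
        gcongr; exact rpow_le_pow_add_inv_pow hs hN
    _ = s ^ N * Real.exp (-δ / s) + s⁻¹ ^ N * Real.exp (-δ / s) := add_mul _ _ _
    _ ≤ (1 + s) ^ N * 1 + N.factorial * δ⁻¹ ^ N * (1 + s) ^ N :=
        add_le_add (by gcongr; linarith) ((inv_pow_mul_exp_neg_div_le hδ hs N).trans
          (le_mul_of_one_le_right (by positivity) hone))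
    _ = _ := by ring

lemma norm_oscPower_eq_sq_mul (δ b a s : ℝ) :
    ‖oscPower δ b a s‖ = s ^ 2 * ‖oscPower δ b (a - 2) s‖ := by
  rcases le_or_gt s 0 with hs | hs
  · simp [oscPower_of_nonpos hs]
  · have hadd := oscPower_add (δ := δ) (b := b) (a := a - 2) hs 2
    rw [sub_add_cancel] at hadd
    rw [hadd, norm_mul, Complex.norm_real, Real.rpow_two, Real.norm_of_nonneg (sq_nonneg s)]

lemma oscPower_isBigO_sq (hδ : 0 < δ) (b a : ℝ) :
    oscPower δ b a =O[𝓝 0] fun s => s ^ 2 := by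
  obtain ⟨k, C, hC⟩ := exists_norm_oscPower_le hδ b (a - 2)
  have hbdd : oscPower δ b (a - 2) =O[𝓝 0] fun _ => (1 : ℝ) :=
    (Asymptotics.IsBigO.of_norm_le hC).trans
      ((Continuous.tendsto (by fun_prop) 0).isBigO_one ℝ)
  have hmul : (fun s => s ^ 2 * ‖oscPower δ b (a - 2) s‖) =O[𝓝 0] fun s => s ^ 2 := by
    simpa only [mul_one] using
      (Asymptotics.isBigO_refl (fun s : ℝ => s ^ 2) (𝓝 0)).mul hbdd.norm_left
  exact .of_norm_left (hmul.congr_left fun s => (norm_oscPower_eq_sq_mul δ b a s).symm)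

lemma hasDerivAt_oscPower_of_pos (δ b a : ℝ) (hs : 0 < s) :
    HasDerivAt (oscPower δ b a)
      (a * oscPower δ b (a - 1) s + δ * oscPower δ b (a - 2) s
        - Complex.I * b * oscPower δ b (a - b - 1) s) s := by
  have hpow := (Real.hasDerivAt_rpow_const (p := a) (Or.inl hs.ne')).ofReal_comp
  have hdecay := ((hasDerivAt_inv hs.ne').const_mul (-δ)).ofReal_comp
  have hphase :=
    (Real.hasDerivAt_rpow_const (p := -b) (Or.inl hs.ne')).ofReal_comp.const_mul Complex.I
  have hformula := (hpow.mul (hdecay.add hphase).cexp).congr_of_eventuallyEq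
    (f₁ := oscPower δ b a) <| by
      filter_upwards [eventually_gt_nhds hs] with x hx
      simp [oscPower_of_pos hx, div_eq_mul_inv]
  have hinv : s ^ (-2 : ℝ) = (s ^ 2)⁻¹ := by rw [Real.rpow_neg hs.le, Real.rpow_two]
  refine hformula.congr_deriv ?_
  rw [sub_eq_add_neg a 1, sub_eq_add_neg a 2, show a - b - 1 = a + (-b - 1) by ring,
    oscPower_add hs, oscPower_add hs, oscPower_add hs, oscPower_of_pos hs,
    Real.rpow_add hs a (-1), hinv]
  simp only [Pi.add_apply, div_eq_mul_inv]
  push_cast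
  ring

lemma hasDerivAt_oscPower (hδ : 0 < δ) (b a s : ℝ) :
    HasDerivAt (oscPower δ b a)
      (a * oscPower δ b (a - 1) s + δ * oscPower δ b (a - 2) s
        - Complex.I * b * oscPower δ b (a - b - 1) s) s := by
  rcases lt_trichotomy s 0 with hs | rfl | hs
  · have hzero : oscPower δ b a =ᶠ[𝓝 s] fun _ => 0 := by
      filter_upwards [eventually_lt_nhds hs] with x hx using oscPower_of_nonpos hx.le
    simpa [oscPower_of_nonpos hs.le] using
      (hasDerivAt_const s (0 : ℂ)).congr_of_eventuallyEq hzero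
  · have hflat : HasFDerivAt (oscPower δ b a) (0 : ℝ →L[ℝ] ℂ) 0 :=
      Asymptotics.IsBigO.hasFDerivAt (n := 2)
        (by simpa using (oscPower_isBigO_sq hδ b a).norm_right) one_lt_two
    simpa [oscPower_of_nonpos le_rfl] using hflat.hasDerivAt
  · exact hasDerivAt_oscPower_of_pos δ b a hs

lemma oscPower_hasTemperateGrowth (hδ : 0 < δ) (b a : ℝ) :
    (oscPower δ b a).HasTemperateGrowth := by
  refine hasTemperateGrowth_of_deriv_mem_span (𝕜 := ℂ)
    (fun c s => (hasDerivAt_oscPower hδ b c s).differentiableAt) (fun c => ?_)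
    (fun c => ?_) a
  · have hformula : deriv (oscPower δ b c) = (c : ℂ) • oscPower δ b (c - 1) +
        (δ : ℂ) • oscPower δ b (c - 2) - (Complex.I * b) • oscPower δ b (c - b - 1) :=
      funext fun s => (hasDerivAt_oscPower hδ b c s).deriv
    have hmem (e : ℝ) : oscPower δ b e ∈ Submodule.span ℂ (Set.range (oscPower δ b)) :=
      Submodule.subset_span ⟨e, rfl⟩
    rw [hformula]
    exact sub_mem (add_mem (Submodule.smul_mem _ _ (hmem _)) (Submodule.smul_mem _ _ (hmem _)))
      (Submodule.smul_mem _ _ (hmem _))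
  · obtain ⟨k, C, hC⟩ := exists_norm_oscPower_le hδ b c
    exact ⟨k, .of_bound C (.of_forall fun s => (hC s).trans_eq <| by
      rw [norm_pow, Real.norm_of_nonneg (add_nonneg zero_le_one (norm_nonneg s))])⟩

end OscPower

section PhiSchwartz

lemma Ppoly_hasTemperateGrowth (d m : ℕ) (M : (Fin d → ℕ) → ℂ) :
    (Ppoly d m M).HasTemperateGrowth := by
  have hcoord (i : Fin d) : (fun ξ : Vd d => -Complex.I * (ξ i : ℂ)).HasTemperateGrowth :=
    (Function.HasTemperateGrowth.const _).mul
      (Complex.ofRealCLM.comp (EuclideanSpace.proj i : Vd d →L[ℝ] ℝ)).hasTemperateGrowth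
  exact .sum fun γ _ => (Function.HasTemperateGrowth.const _).mul
    (hasTemperateGrowth_prod fun i _ => (hcoord i).pow (γ i))

lemma sq_rpow_natCast_div_two {x : ℝ} (hx : 0 ≤ x) (n : ℕ) :
    (x ^ 2) ^ ((n : ℝ) / 2) = x ^ n := by
  rw [← Real.rpow_natCast_mul hx, Nat.cast_ofNat, mul_div_cancel₀ _ two_ne_zero, Real.rpow_natCast]

lemma fdelta_eq_im_oscPower (d m : ℕ) (δ : ℝ) (ξ : Vd d) :
    fdelta d m δ ξ = (oscPower δ ((m : ℝ) / 2) (((m + 2 : ℕ) : ℝ) / 2) (‖ξ‖ ^ 2)).im := by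
  rcases eq_or_ne ξ 0 with rfl | hξ
  · simp [fdelta, oscPower_of_nonpos]
  · have hpos : 0 < ‖ξ‖ ^ 2 := by positivity
    rw [fdelta, if_neg hξ, im_oscPower_of_pos hpos, Real.rpow_neg hpos.le,
      sq_rpow_natCast_div_two (norm_nonneg ξ), sq_rpow_natCast_div_two (norm_nonneg ξ),
      one_div]

lemma fdelta_hasTemperateGrowth (d m : ℕ) {δ : ℝ} (hδ : 0 < δ) :
    (fdelta d m δ).HasTemperateGrowth := by
  rw [funext (fdelta_eq_im_oscPower d m δ)]
  exact (ContinuousLinearMap.hasTemperateGrowth Complex.imCLM).comp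
    ((oscPower_hasTemperateGrowth hδ ((m : ℝ) / 2) (((m + 2 : ℕ) : ℝ) / 2)).comp
      (Function.hasTemperateGrowth_norm_sq (Vd d)))

lemma phiFun_eq (d : ℕ) {m : ℕ} (hm : m ≠ 0) (M : (Fin d → ℕ) → ℂ) (δ : ℝ) (ξ : Vd d) :
    phiFun d m M δ ξ =
      (Ppoly d m M ξ + fdelta d m δ ξ) * (Real.exp (-‖ξ‖ ^ (2 * m)) : ℂ) := by
  rcases eq_or_ne ξ 0 with rfl | hξ
  · simp [phiFun, fdelta, hm]
  · simp [phiFun, fdelta, hξ]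

lemma le_pow_add_one {r : ℝ} (hr : 0 ≤ r) {n : ℕ} (hn : n ≠ 0) : r ≤ r ^ n + 1 := by
  rcases le_total r 1 with h | h
  · linarith [pow_nonneg hr n]
  · linarith [le_self_pow₀ h hn]

lemma exists_schwartzMap_eq_phiFun (d : ℕ) {m : ℕ} (hm : m ≠ 0) (M : (Fin d → ℕ) → ℂ)
    {δ : ℝ} (hδ : 0 < δ) : ∃ φ : 𝓢(Vd d, ℂ), ⇑φ = phiFun d m M δ := by
  have hphase : (fun ξ : Vd d => ‖ξ‖ ^ (2 * m)).HasTemperateGrowth := by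
    simp only [pow_mul]
    exact (Function.hasTemperateGrowth_norm_sq (Vd d)).pow m
  have hcoercive (ξ : Vd d) : ‖ξ‖ ≤ ‖ξ‖ ^ (2 * m) + 1 :=
    le_pow_add_one (norm_nonneg ξ) (by lia)
  have hamplitude : (fun ξ => Ppoly d m M ξ + (fdelta d m δ ξ : ℂ)).HasTemperateGrowth :=
    (Ppoly_hasTemperateGrowth d m M).add
      ((ContinuousLinearMap.hasTemperateGrowth Complex.ofRealCLM).comp
        (fdelta_hasTemperateGrowth d m hδ))
  refine ⟨SchwartzMap.smulLeftCLM ℂ (fun ξ => Ppoly d m M ξ + (fdelta d m δ ξ : ℂ))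
    (SchwartzMap.postcompCLM Complex.ofRealCLM (expNegSchwartz hphase hcoercive)), ?_⟩
  ext ξ
  rw [SchwartzMap.smulLeftCLM_apply_apply hamplitude, phiFun_eq d hm, smul_eq_mul]
  rfl

lemma fdelta_isBigO (d m : ℕ) {δ : ℝ} (hδ : 0 ≤ δ) :
    fdelta d m δ =O[⊤] fun ξ => ‖ξ‖ ^ (m + 2) := by
  refine .of_bound 1 (.of_forall fun ξ => ?_)
  rcases eq_or_ne ξ 0 with rfl | hξ
  · simp [fdelta]
  have hexp : Real.exp (-δ / ‖ξ‖ ^ 2) ≤ 1 :=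
    Real.exp_le_one_iff.2 (div_nonpos_of_nonpos_of_nonneg (by linarith) (by positivity))
  rw [fdelta, if_neg hξ, norm_mul, norm_mul, mul_assoc, one_mul,
    Real.norm_of_nonneg (Real.exp_nonneg _)]
  exact mul_le_of_le_one_right (norm_nonneg _)
    (mul_le_one₀ (Real.abs_sin_le_one _) (Real.exp_nonneg _) hexp)

lemma norm_pow_isLittleO_norm_pow {E : Type*} [SeminormedAddCommGroup E] {k n : ℕ} (h : k < n) :
    (fun x : E => ‖x‖ ^ n) =o[𝓝 0] fun x => ‖x‖ ^ k :=
  (Asymptotics.isLittleO_pow_pow h).comp_tendsto tendsto_norm_zero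

lemma phiFun_sub_Ppoly_isLittleO (d : ℕ) {m : ℕ} (hm : m ≠ 0) (M : (Fin d → ℕ) → ℂ)
    {δ : ℝ} (hδ : 0 ≤ δ) :
    (fun ξ => phiFun d m M δ ξ - Ppoly d m M ξ) =o[𝓝 0] fun ξ => ‖ξ‖ ^ m := by
  have hP : Ppoly d m M =O[𝓝 0] fun _ => (1 : ℝ) :=
    ((Ppoly_hasTemperateGrowth d m M).1.continuous.tendsto 0).isBigO_one ℝ
  have hexp : (fun ξ : Vd d => Real.exp (-‖ξ‖ ^ (2 * m))) =O[𝓝 0] fun _ => (1 : ℝ) :=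
    (Continuous.tendsto (by fun_prop) 0).isBigO_one ℝ
  have hexp_sub_one : (fun ξ : Vd d => Real.exp (-‖ξ‖ ^ (2 * m)) - 1) =O[𝓝 0]
      fun ξ => ‖ξ‖ ^ (2 * m) := by
    have hphase : Tendsto (fun ξ : Vd d => -‖ξ‖ ^ (2 * m)) (𝓝 0) (𝓝 0) :=
      Continuous.tendsto' (by fun_prop) _ _ (by simp [hm])
    simpa [Function.comp_def] using
      ((Real.hasDerivAt_exp 0).isBigO_sub.comp_tendsto hphase).neg_right
  have hmain : (fun ξ => Ppoly d m M ξ * ((Real.exp (-‖ξ‖ ^ (2 * m)) - 1 : ℝ) : ℂ))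
      =o[𝓝 0] fun ξ => ‖ξ‖ ^ m := by
    refine Asymptotics.IsBigO.trans_isLittleO ?_
      (norm_pow_isLittleO_norm_pow (show m < 2 * m by lia))
    simpa only [one_mul] using hP.mul (Complex.isBigO_ofReal_left.2 hexp_sub_one)
  have herror : (fun ξ => (fdelta d m δ ξ : ℂ) * (Real.exp (-‖ξ‖ ^ (2 * m)) : ℂ))
      =o[𝓝 0] fun ξ => ‖ξ‖ ^ m := by
    refine Asymptotics.IsBigO.trans_isLittleO ?_
      (norm_pow_isLittleO_norm_pow (show m < m + 2 by lia))
    simpa only [mul_one] using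
      (Complex.isBigO_ofReal_left.2 ((fdelta_isBigO d m hδ).mono le_top)).mul
      (Complex.isBigO_ofReal_left.2 hexp)
  refine (hmain.add herror).congr_left fun ξ => ?_
  rw [phiFun_eq d hm]
  push_cast
  ring

end PhiSchwartz

section Density

variable {α : Type*} {mα : MeasurableSpace α} {ν : Measure α} {ψ : α → ℂ}

lemma posPart_toJordanDecomposition_withDensityᵥ {f : α → ℝ} (hf : Integrable f ν) :
    (SignedMeasure.toJordanDecomposition (ν.withDensityᵥ f)).posPart =
      ν.withDensity fun x => ENNReal.ofReal (f x) := by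
  obtain ⟨g, hg, hfg⟩ := hf.1.aemeasurable
  have hjordan := SignedMeasure.toJordanDecomposition_eq_of_eq_add_withDensity (t := 0)
    hg (hf.congr hfg) VectorMeasure.MutuallySingular.zero_left
    (zero_add _).symm
  rw [WithDensityᵥEq.congr_ae hfg, hjordan,
    withDensity_congr_ae (f := fun x => ENNReal.ofReal (f x)) (hfg.fun_comp ENNReal.ofReal)]
  simp [SignedMeasure.toJordanDecomposition_zero, Function.comp_def]

lemma negPart_toJordanDecomposition_withDensityᵥ {f : α → ℝ} (hf : Integrable f ν) :
    (SignedMeasure.toJordanDecomposition (ν.withDensityᵥ f)).negPart =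
      ν.withDensity fun x => ENNReal.ofReal (-f x) := by
  have hneg := posPart_toJordanDecomposition_withDensityᵥ hf.neg
  rwa [withDensityᵥ_neg, SignedMeasure.toJordanDecomposition_neg] at hneg

lemma totalVariation_withDensityᵥ {f : α → ℝ} (hf : Integrable f ν) :
    SignedMeasure.totalVariation (ν.withDensityᵥ f) = ν.withDensity fun x => ‖f x‖ₑ := by
  rw [SignedMeasure.totalVariation, posPart_toJordanDecomposition_withDensityᵥ hf,
    negPart_toJordanDecomposition_withDensityᵥ hf]
  ext A hA
  rw [Measure.add_apply, withDensity_apply _ hA, withDensity_apply _ hA, withDensity_apply _ hA,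
    ← lintegral_add_left' hf.1.aemeasurable.ennreal_ofReal.restrict]
  congr 1 with x
  rcases le_total 0 (f x) with h | h
  · simp [h, Real.enorm_of_nonneg h]
  · simp [h, ← enorm_neg (f x), Real.enorm_of_nonneg (neg_nonneg.2 h)]

lemma integral_posPart_sub_integral_negPart_withDensityᵥ {E : Type*} [NormedAddCommGroup E]
    [NormedSpace ℝ E] {f : α → ℝ} (hf : Integrable f ν) {g : α → E}
    (hfg : Integrable (fun x => f x • g x) ν) :
    (∫ x, g x ∂(SignedMeasure.toJordanDecomposition (ν.withDensityᵥ f)).posPart) -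
      (∫ x, g x ∂(SignedMeasure.toJordanDecomposition (ν.withDensityᵥ f)).negPart) =
        ∫ x, f x • g x ∂ν := by
  have hmax (h : α → ℝ) (hh : AEMeasurable h ν) (hhg : Integrable (fun x => h x • g x) ν) :
      Integrable (fun x => max (h x) 0 • g x) ν := by
    have hpos : NullMeasurableSet {x | 0 < h x} ν := nullMeasurableSet_lt aemeasurable_const hh
    refine (hhg.indicator₀ hpos).congr (.of_forall fun x => ?_)
    rcases lt_or_ge 0 (h x) with hx | hx
    · simp [hx, hx.le]
    · simp [hx, hx.not_gt]
  have hneg : Integrable (fun x => -f x • g x) ν := by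
    simpa only [neg_smul] using Integrable.fun_neg hfg
  rw [posPart_toJordanDecomposition_withDensityᵥ hf, negPart_toJordanDecomposition_withDensityᵥ hf,
    integral_withDensity_eq_integral_toReal_smul₀ hf.1.aemeasurable.ennreal_ofReal (by simp),
    integral_withDensity_eq_integral_toReal_smul₀ hf.1.aemeasurable.fun_neg.ennreal_ofReal
      (by simp)]
  simp only [ENNReal.toReal_ofReal']
  rw [← integral_sub (hmax f hf.1.aemeasurable hfg) (hmax _ hf.1.aemeasurable.fun_neg hneg)]
  simp only [← sub_smul, max_zero_sub_max_neg_zero_eq_self]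

lemma mapRange_withDensityᵥ {E F : Type*} [NormedAddCommGroup E] [NormedSpace ℝ E]
    [CompleteSpace E] [NormedAddCommGroup F] [NormedSpace ℝ F] [CompleteSpace F] (L : E →L[ℝ] F)
    {f : α → E} (hf : Integrable f ν) :
    (ν.withDensityᵥ f).mapRange (L : E →+ F) L.continuous = ν.withDensityᵥ fun x => L (f x) := by
  ext A hA
  rw [withDensityᵥ_apply (L.integrable_comp hf) hA]
  change L (ν.withDensityᵥ f A) = _
  rw [withDensityᵥ_apply hf hA]
  exact (L.integral_comp_comm hf.integrableOn).symm

lemma re_withDensityᵥ (hψ : Integrable ψ ν) :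
    ComplexMeasure.re (ν.withDensityᵥ ψ) = ν.withDensityᵥ fun x => (ψ x).re :=
  mapRange_withDensityᵥ Complex.reCLM hψ

lemma im_withDensityᵥ (hψ : Integrable ψ ν) :
    ComplexMeasure.im (ν.withDensityᵥ ψ) = ν.withDensityᵥ fun x => (ψ x).im :=
  mapRange_withDensityᵥ Complex.imCLM hψ

end Density

section VdDensity

variable {d : ℕ} {ν : Measure (Vd d)} {ψ : Vd d → ℂ}

lemma cint_withDensityᵥ (hψ : Integrable ψ ν) {g : Vd d → ℂ} (hg : AEStronglyMeasurable g ν)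
    (hψg : Integrable (fun x => ψ x * g x) ν) :
    cint (ν.withDensityᵥ ψ) g = ∫ x, ψ x * g x ∂ν := by
  have hre : Integrable (fun x => (ψ x).re • g x) ν :=
    hψg.mono (hψ.re.1.smul hg) (.of_forall fun x => by
      rw [norm_smul, norm_mul]
      gcongr
      exact Complex.abs_re_le_norm _)
  have him : Integrable (fun x => (ψ x).im • g x) ν :=
    hψg.mono (hψ.im.1.smul hg) (.of_forall fun x => by
      rw [norm_smul, norm_mul]
      gcongr
      exact Complex.abs_im_le_norm _)
  rw [cint, re_withDensityᵥ hψ, im_withDensityᵥ hψ,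
    integral_posPart_sub_integral_negPart_withDensityᵥ (f := fun x => (ψ x).re) hψ.re hre,
    integral_posPart_sub_integral_negPart_withDensityᵥ (f := fun x => (ψ x).im) hψ.im him,
    ← integral_const_mul, ← integral_add hre (him.const_mul _)]
  congr 1 with x
  conv_rhs => rw [← Complex.re_add_im (ψ x)]
  simp only [Complex.real_smul]
  ring

lemma lintegral_ctv_withDensityᵥ_le (hψ : Integrable ψ ν) {h : Vd d → ℝ≥0∞}
    (hh : AEMeasurable h ν) :
    ∫⁻ x, h x ∂ctv (ν.withDensityᵥ ψ) ≤ 2 * ∫⁻ x, ‖ψ x‖ₑ * h x ∂ν := by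
  have hψre : Integrable (fun x => (ψ x).re) ν := hψ.re
  have hψim : Integrable (fun x => (ψ x).im) ν := hψ.im
  rw [ctv, re_withDensityᵥ hψ, im_withDensityᵥ hψ, totalVariation_withDensityᵥ hψre,
    totalVariation_withDensityᵥ hψim, lintegral_add_measure,
    lintegral_withDensity_eq_lintegral_mul₀ hψre.1.enorm hh,
    lintegral_withDensity_eq_lintegral_mul₀ hψim.1.enorm hh, two_mul]
  gcongr with x x
  · exact mul_le_mul_left (enorm_le_iff_norm_le.2 (Complex.abs_re_le_norm (ψ x))) _
  · exact mul_le_mul_left (enorm_le_iff_norm_le.2 (Complex.abs_im_le_norm (ψ x))) _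

end VdDensity

section FourierInversion

variable {V : Type*} [NormedAddCommGroup V] [InnerProductSpace ℝ V] [FiniteDimensional ℝ V]
  [MeasurableSpace V] [BorelSpace V]

/-- The inverse Fourier transform of a Schwartz function in the angular-frequency normalization
`(2π)^{-d} ∫ φ(ξ) e^{i ξ·x} dξ`, obtained from Mathlib's `𝓕⁻`, whose kernel is `e^{2πi ξ·x}`,
by rescaling the variable. -/
def angularFourierInv (φ : 𝓢(V, ℂ)) : 𝓢(V, ℂ) :=
  ((2 * Real.pi) ^ Module.finrank ℝ V)⁻¹ • SchwartzMap.compCLMOfContinuousLinearEquiv ℝ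
    (ContinuousLinearEquiv.smulLeft (R₁ := ℝ) (M₁ := V)
      (Units.mk0 (2 * Real.pi)⁻¹ (by positivity))) (𝓕⁻ φ)

lemma angularFourierInv_eq_smul_fourierInv (φ : 𝓢(V, ℂ)) (x : V) :
    angularFourierInv φ x =
      ((2 * Real.pi) ^ Module.finrank ℝ V)⁻¹ • (𝓕⁻ φ) ((2 * Real.pi)⁻¹ • x) :=
  rfl

lemma angularFourierInv_apply (φ : 𝓢(V, ℂ)) (x : V) :
    angularFourierInv φ x = ((2 * Real.pi) ^ Module.finrank ℝ V)⁻¹ •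
      ∫ ξ, φ ξ * Complex.exp (Complex.I * (inner ℝ ξ x : ℝ)) := by
  rw [angularFourierInv_eq_smul_fourierInv, SchwartzMap.fourierInv_coe, Real.fourierInv_eq']
  congr 2 with ξ
  rw [inner_smul_right, mul_inv_cancel_left₀ (by positivity), smul_eq_mul, mul_comm,
    mul_comm Complex.I]

lemma integral_angularFourierInv_mul_exp (φ : 𝓢(V, ℂ)) (ξ : V) :
    ∫ x, angularFourierInv φ x * Complex.exp (-Complex.I * (inner ℝ x ξ : ℝ)) = φ ξ := by
  let F (v : V) : ℂ := Complex.exp ((-2 * Real.pi * inner ℝ v ξ : ℝ) * Complex.I) • (𝓕⁻ φ) v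
  have hkernel (x : V) :
      angularFourierInv φ x * Complex.exp (-Complex.I * (inner ℝ x ξ : ℝ)) =
        ((2 * Real.pi) ^ Module.finrank ℝ V)⁻¹ • F ((2 * Real.pi)⁻¹ • x) := by
    have hphase : -2 * Real.pi * inner ℝ ((2 * Real.pi)⁻¹ • x) ξ = -inner ℝ x ξ := by
      rw [inner_smul_left, conj_trivial, neg_mul, neg_mul, mul_inv_cancel_left₀ (by positivity)]
    simp only [F]
    rw [angularFourierInv_eq_smul_fourierInv, smul_mul_assoc, hphase, smul_eq_mul,
      mul_comm (Complex.exp _)]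
    push_cast
    ring_nf
  simp only [hkernel]
  rw [integral_smul, Measure.integral_comp_smul volume F, inv_pow, inv_inv,
    abs_of_pos (by positivity), inv_smul_smul₀ (by positivity)]
  calc ∫ v, F v = 𝓕 (𝓕⁻ φ) ξ := by rw [SchwartzMap.fourier_coe, Real.fourier_eq']
    _ = φ ξ := by rw [FourierTransform.fourier_fourierInv_eq]

end FourierInversion

section MomentPolynomial

variable {d m : ℕ}

lemma mem_multiIdx {γ : Fin d → ℕ} : γ ∈ multiIdx d m ↔ ∑ i, γ i ≤ m := by
  simp only [multiIdx, Finset.mem_filter, Fintype.mem_piFinset, Finset.mem_range,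
    and_iff_right_iff_imp]
  exact fun h i => Nat.lt_succ_of_le
    ((Finset.single_le_sum (fun _ _ => Nat.zero_le _) (Finset.mem_univ i)).trans h)

lemma sum_multiIdx {E : Type*} [AddCommMonoid E] (d m : ℕ) (f : (Fin d → ℕ) → E) :
    ∑ γ ∈ multiIdx d m, f γ =
      ∑ k ∈ Finset.range (m + 1), ∑ γ ∈ Finset.piAntidiag Finset.univ k, f γ := by
  rw [← Finset.sum_fiberwise_of_maps_to (g := fun γ : Fin d → ℕ => ∑ i, γ i)
    fun γ hγ => Finset.mem_range_succ_iff.2 (mem_multiIdx.1 hγ)]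
  refine Finset.sum_congr rfl fun k hk => Finset.sum_congr ?_ fun _ _ => rfl
  ext γ
  have hkm := Finset.mem_range_succ_iff.1 hk
  simp only [Finset.mem_filter, mem_multiIdx, Finset.mem_piAntidiag, Finset.mem_univ,
    implies_true, and_true, and_iff_right_iff_imp]
  exact fun h => h.le.trans hkm

lemma prod_factorial_ne_zero (γ : Fin d → ℕ) : ∏ i, ((γ i).factorial : ℂ) ≠ 0 :=
  Finset.prod_ne_zero_iff.2 fun i _ => Nat.cast_ne_zero.2 (γ i).factorial_ne_zero

lemma sum_pow_div_factorial_eq_sum_piAntidiag (z : Fin d → ℂ) (k : ℕ) :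
    (∑ i, z i) ^ k / k.factorial =
      ∑ γ ∈ Finset.piAntidiag Finset.univ k, (∏ i, z i ^ γ i) / ∏ i, ((γ i).factorial : ℂ) := by
  rw [Finset.sum_pow_eq_sum_piAntidiag, Finset.sum_div]
  refine Finset.sum_congr rfl fun γ hγ => ?_
  have hspec := Nat.multinomial_spec Finset.univ γ
  rw [(Finset.mem_piAntidiag.1 hγ).1] at hspec
  rw [div_eq_div_iff (Nat.cast_ne_zero.2 k.factorial_ne_zero) (prod_factorial_ne_zero γ), ← hspec]
  push_cast
  ring

lemma Ppoly_sub (M N : (Fin d → ℕ) → ℂ) : Ppoly d m (M - N) = Ppoly d m M - Ppoly d m N := by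
  ext ξ
  simp only [Ppoly, Pi.sub_apply, sub_div, sub_mul, Finset.sum_sub_distrib]

lemma Ppoly_smul (M : (Fin d → ℕ) → ℂ) (t : ℝ) (ξ : Vd d) :
    Ppoly d m M (t • ξ) = ∑ k ∈ Finset.range (m + 1),
      t ^ k • ∑ γ ∈ Finset.piAntidiag Finset.univ k,
        (M γ / ∏ i, (Nat.factorial (γ i) : ℂ)) * ∏ i, (-(Complex.I) * (ξ i)) ^ (γ i) := by
  rw [Ppoly, sum_multiIdx]
  refine Finset.sum_congr rfl fun k _ => ?_
  rw [Finset.smul_sum]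
  refine Finset.sum_congr rfl fun γ hγ => ?_
  rw [← (Finset.mem_piAntidiag.1 hγ).1, ← Finset.prod_pow_eq_pow_sum, Complex.real_smul,
    Complex.ofReal_prod, mul_left_comm, ← Finset.prod_mul_distrib]
  congr 2 with i
  rw [PiLp.smul_apply, smul_eq_mul, Complex.ofReal_mul, Complex.ofReal_pow, ← mul_pow]
  ring

lemma eq_zero_of_pow_smul_isLittleO {E : Type*} [NormedAddCommGroup E] [NormedSpace ℝ E]
    {a : E} {n : ℕ} (h : (fun t : ℝ => t ^ n • a) =o[𝓝 0] fun t => t ^ n) : a = 0 := by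
  refine tendsto_nhds_unique (tendsto_const_nhds (x := a) (f := 𝓝[≠] (0 : ℝ))) ?_
  refine ((h.tendsto_inv_smul_nhds_zero).mono_left nhdsWithin_le_nhds).congr' ?_
  filter_upwards [self_mem_nhdsWithin] with t ht
  exact inv_smul_smul₀ (pow_ne_zero n ht) a

lemma eq_zero_of_sum_pow_smul_isLittleO {E : Type*} [NormedAddCommGroup E] [NormedSpace ℝ E]
    {a : ℕ → E} {n : ℕ}
    (h : (fun t : ℝ => ∑ k ∈ Finset.range (n + 1), t ^ k • a k) =o[𝓝 0] fun t => t ^ n) :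
    ∀ k ≤ n, a k = 0 := by
  induction n with
  | zero =>
    intro k hk
    obtain rfl : k = 0 := Nat.le_zero.1 hk
    simpa using h
  | succ n ih =>
    have hlt : (fun t : ℝ => t ^ (n + 1)) =o[𝓝 0] fun t => t ^ n :=
      Asymptotics.isLittleO_pow_pow n.lt_succ_self
    have hlast : (fun t : ℝ => t ^ (n + 1) • a (n + 1)) =O[𝓝 0] fun t => t ^ (n + 1) :=
      .of_bound ‖a (n + 1)‖ (.of_forall fun t => by rw [norm_smul, mul_comm])
    have hlower : ∀ k ≤ n, a k = 0 := ih <|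
      ((h.trans hlt).sub (hlast.trans_isLittleO hlt)).congr_left fun t => by
        rw [Finset.sum_range_succ, add_sub_cancel_right]
    have htop : a (n + 1) = 0 := eq_zero_of_pow_smul_isLittleO <| h.congr_left fun t => by
      rw [Finset.sum_range_succ, Finset.sum_eq_zero, zero_add]
      intro k hk
      rw [hlower k (Finset.mem_range_succ_iff.1 hk), smul_zero]
    exact fun k hk => (Nat.le_succ_iff.1 hk).elim (hlower k) fun hk => hk ▸ htop

lemma Ppoly_eq_zero_of_isLittleO {K : (Fin d → ℕ) → ℂ}
    (h : Ppoly d m K =o[𝓝 0] fun ξ => ‖ξ‖ ^ m) : Ppoly d m K = 0 := by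
  ext ξ
  have hline : (fun t : ℝ => Ppoly d m K (t • ξ)) =o[𝓝 0] fun t => t ^ m := by
    have hsmul : Tendsto (fun t : ℝ => t • ξ) (𝓝 0) (𝓝 0) :=
      Continuous.tendsto' (by fun_prop) _ _ (zero_smul ℝ ξ)
    refine (h.comp_tendsto hsmul).trans_isBigO (.of_bound (‖ξ‖ ^ m) (.of_forall fun t => ?_))
    simp [norm_smul, mul_pow, mul_comm]
  simp only [Ppoly_smul] at hline
  have hzero := eq_zero_of_sum_pow_smul_isLittleO hline
  rw [← one_smul ℝ ξ, Ppoly_smul]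
  exact Finset.sum_eq_zero fun k hk => by
    rw [hzero k (Finset.mem_range_succ_iff.1 hk), smul_zero]

lemma eq_zero_of_Ppoly_eq_zero {K : (Fin d → ℕ) → ℂ} (h : Ppoly d m K = 0) {β : Fin d → ℕ}
    (hβ : ∑ i, β i ≤ m) : K β = 0 := by
  let Q : MvPolynomial (Fin d) ℂ := ∑ γ ∈ multiIdx d m,
    MvPolynomial.monomial (Finsupp.equivFunOnFinite.symm γ) (K γ / ∏ i, (Nat.factorial (γ i) : ℂ))
  have heval (ξ : Vd d) : MvPolynomial.eval (fun i => -Complex.I * ξ i) Q = Ppoly d m K ξ := by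
    simp only [Q, map_sum, MvPolynomial.eval_monomial, Finsupp.prod_fintype, pow_zero,
      implies_true, Ppoly, Finsupp.equivFunOnFinite_symm_apply_apply]
  have hinfinite : (Set.range fun t : ℝ => -Complex.I * t).Infinite :=
    Set.infinite_range_of_injective fun s t hst => by simpa using hst
  have hQ : Q = 0 := by
    refine MvPolynomial.funext_set (fun _ => Set.range fun t : ℝ => -Complex.I * t)
      (fun _ => hinfinite) fun x hx => ?_
    choose ξ hξ using fun i => hx i (Set.mem_univ i)
    rw [map_zero, ← funext hξ]
    exact (heval (WithLp.toLp 2 ξ)).trans (congrFun h _)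
  have hcoeff : Q.coeff (Finsupp.equivFunOnFinite.symm β) =
      K β / ∏ i, (Nat.factorial (β i) : ℂ) := by
    simp [Q, MvPolynomial.coeff_sum, MvPolynomial.coeff_monomial, mem_multiIdx, hβ]
  rw [hQ, MvPolynomial.coeff_zero, eq_comm, div_eq_zero_iff] at hcoeff
  exact hcoeff.resolve_right (prod_factorial_ne_zero β)

end MomentPolynomial

section MomentExpansion

lemma norm_exp_neg_I_mul_ofReal_sub_sum_le (n : ℕ) (y : ℝ) :
    ‖Complex.exp (-Complex.I * y) - ∑ k ∈ Finset.range n, (-Complex.I * y) ^ k / k.factorial‖ ≤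
      (n + 3) * |y| ^ n := by
  have hnorm : ‖-Complex.I * (y : ℂ)‖ = |y| := by simp
  rcases le_total |y| 1 with hy | hy
  · calc _ ≤ |y| ^ n * Real.exp |y| :=
          hnorm ▸ Complex.norm_exp_sub_sum_le_norm_mul_exp (-Complex.I * y) n
      _ ≤ |y| ^ n * (n + 3) := by
          gcongr
          linarith [Real.exp_le_exp.2 hy, Real.exp_one_lt_d9, n.cast_nonneg (α := ℝ)]
      _ = (n + 3) * |y| ^ n := mul_comm _ _
  · have hexp : ‖Complex.exp (-Complex.I * y)‖ ≤ |y| ^ n := by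
      simpa [Complex.norm_exp] using one_le_pow₀ hy
    have hterm (k : ℕ) (hk : k ∈ Finset.range n) :
        ‖(-Complex.I * (y : ℂ)) ^ k / k.factorial‖ ≤ |y| ^ n := by
      rw [norm_div, norm_pow, hnorm, Complex.norm_natCast]
      exact (div_le_self (by positivity) (Nat.one_le_cast.2 k.factorial_pos)).trans
        (pow_le_pow_right₀ hy (Finset.mem_range.1 hk).le)
    have hsum := norm_sum_le_of_le _ hterm
    rw [Finset.sum_const, Finset.card_range, nsmul_eq_mul] at hsum
    linarith [norm_sub_le (Complex.exp (-Complex.I * y))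
      (∑ k ∈ Finset.range n, (-Complex.I * y) ^ k / k.factorial), pow_nonneg (abs_nonneg y) n]

variable {d : ℕ} {ν : Measure (Vd d)} {f : Vd d → ℂ}

lemma sum_mul_eq_inner (x ξ : Vd d) : ∑ i, x i * ξ i = inner ℝ x ξ := by
  simp [PiLp.inner_apply, mul_comm]

lemma norm_prod_pow_le (x : Vd d) (γ : Fin d → ℕ) :
    ‖∏ i, (x i : ℂ) ^ γ i‖ ≤ ‖x‖ ^ ∑ i, γ i := by
  rw [norm_prod, ← Finset.prod_pow_eq_pow_sum]
  gcongr with i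
  rw [norm_pow, Complex.norm_real]
  gcongr
  exact PiLp.norm_apply_le x i

lemma integrable_mul_prod_pow (hf : AEStronglyMeasurable f ν) (γ : Fin d → ℕ)
    (h : Integrable (fun x => ‖x‖ ^ (∑ i, γ i) * ‖f x‖) ν) :
    Integrable (fun x => f x * ∏ i, (x i : ℂ) ^ γ i) ν := by
  refine h.mono' (hf.mul (Continuous.aestronglyMeasurable (by fun_prop))) (.of_forall fun x => ?_)
  rw [norm_mul, mul_comm]
  gcongr
  exact norm_prod_pow_le x γ

lemma integrable_mul_exp_neg_I_mul_inner (hf : Integrable f ν) (ξ : Vd d) :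
    Integrable (fun x => f x * Complex.exp (-Complex.I * (inner ℝ x ξ : ℝ))) ν :=
  hf.mono (hf.1.mul (Continuous.aestronglyMeasurable (by fun_prop)))
    (.of_forall fun x => by simp [Complex.norm_exp])

lemma sum_range_neg_I_mul_inner_pow (m : ℕ) (x ξ : Vd d) :
    ∑ k ∈ Finset.range (m + 1), (-Complex.I * (inner ℝ x ξ : ℝ)) ^ k / k.factorial =
      Ppoly d m (fun γ => ∏ i, (x i : ℂ) ^ γ i) ξ := by
  have hinner : -Complex.I * (inner ℝ x ξ : ℝ) = ∑ i, (x i : ℂ) * (-Complex.I * ξ i) := by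
    rw [← sum_mul_eq_inner, Complex.ofReal_sum, Finset.mul_sum]
    refine Finset.sum_congr rfl fun i _ => ?_
    rw [Complex.ofReal_mul, mul_left_comm]
  rw [Ppoly, sum_multiIdx, hinner]
  refine Finset.sum_congr rfl fun k _ => ?_
  rw [sum_pow_div_factorial_eq_sum_piAntidiag]
  refine Finset.sum_congr rfl fun γ _ => ?_
  simp only [mul_pow (x _ : ℂ), Finset.prod_mul_distrib, div_mul_eq_mul_div]

lemma mul_Ppoly (c : ℂ) (m : ℕ) (M : (Fin d → ℕ) → ℂ) (ξ : Vd d) :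
    c * Ppoly d m M ξ = Ppoly d m (fun γ => c * M γ) ξ := by
  simp only [Ppoly, Finset.mul_sum, mul_div_assoc, mul_assoc]

lemma integrable_Ppoly {M : Vd d → (Fin d → ℕ) → ℂ} {m : ℕ}
    (hM : ∀ γ, ∑ i, γ i ≤ m → Integrable (fun x => M x γ) ν) (ξ : Vd d) :
    Integrable (fun x => Ppoly d m (M x) ξ) ν :=
  integrable_finsetSum _ fun γ hγ => ((hM γ (mem_multiIdx.1 hγ)).div_const _).mul_const _

lemma integral_Ppoly {M : Vd d → (Fin d → ℕ) → ℂ} {m : ℕ}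
    (hM : ∀ γ, ∑ i, γ i ≤ m → Integrable (fun x => M x γ) ν) (ξ : Vd d) :
    ∫ x, Ppoly d m (M x) ξ ∂ν = Ppoly d m (fun γ => ∫ x, M x γ ∂ν) ξ := by
  simp only [Ppoly]
  rw [integral_finsetSum _ fun γ hγ => ((hM γ (mem_multiIdx.1 hγ)).div_const _).mul_const _]
  simp only [integral_mul_const, integral_div]

lemma integral_mul_exp_sub_Ppoly_isBigO (hf : AEStronglyMeasurable f ν) {m : ℕ}
    (hmom : ∀ k ≤ m + 1, Integrable (fun x => ‖x‖ ^ k * ‖f x‖) ν) :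
    (fun ξ => ∫ x, f x * Complex.exp (-Complex.I * (inner ℝ x ξ : ℝ)) ∂ν -
      Ppoly d m (fun γ => ∫ x, f x * ∏ i, (x i : ℂ) ^ γ i ∂ν) ξ) =O[⊤]
      fun ξ => ‖ξ‖ ^ (m + 1) := by
  have hinteg : Integrable f ν :=
    (integrable_norm_iff hf).1 (by simpa using hmom 0 (Nat.zero_le _))
  have hmonomial (γ : Fin d → ℕ) (hγ : ∑ i, γ i ≤ m) :
      Integrable (fun x => f x * ∏ i, (x i : ℂ) ^ γ i) ν :=
    integrable_mul_prod_pow hf γ (hmom _ (hγ.trans m.le_succ))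
  refine .of_bound (∫ x, ((m + 1 : ℕ) + 3) * (‖x‖ ^ (m + 1) * ‖f x‖) ∂ν) (.of_forall fun ξ => ?_)
  rw [← integral_Ppoly hmonomial, ← integral_sub (integrable_mul_exp_neg_I_mul_inner hinteg ξ)
    (integrable_Ppoly hmonomial ξ), ← integral_mul_const]
  refine norm_integral_le_of_norm_le (((hmom _ le_rfl).const_mul _).mul_const _)
    (.of_forall fun x => ?_)
  rw [← mul_Ppoly, ← sum_range_neg_I_mul_inner_pow, ← mul_sub, norm_mul]
  calc _ ≤ ‖f x‖ * (((m + 1 : ℕ) + 3) * |inner ℝ x ξ| ^ (m + 1)) := by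
        gcongr
        exact norm_exp_neg_I_mul_ofReal_sub_sum_le _ _
    _ ≤ ‖f x‖ * (((m + 1 : ℕ) + 3) * (‖x‖ * ‖ξ‖) ^ (m + 1)) := by
        gcongr
        exact abs_real_inner_le_norm x ξ
    _ = _ := by
        rw [norm_pow, norm_norm]
        ring

lemma integral_mul_prod_pow_eq_of_isLittleO (hf : AEStronglyMeasurable f ν) {m : ℕ}
    (hmom : ∀ k ≤ m + 1, Integrable (fun x => ‖x‖ ^ k * ‖f x‖) ν) {M : (Fin d → ℕ) → ℂ}
    (hM : (fun ξ => ∫ x, f x * Complex.exp (-Complex.I * (inner ℝ x ξ : ℝ)) ∂ν - Ppoly d m M ξ)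
      =o[𝓝 0] fun ξ => ‖ξ‖ ^ m) {β : Fin d → ℕ} (hβ : ∑ i, β i ≤ m) :
    ∫ x, f x * ∏ i, (x i : ℂ) ^ β i ∂ν = M β := by
  have hdiff : Ppoly d m ((fun γ => ∫ x, f x * ∏ i, (x i : ℂ) ^ γ i ∂ν) - M) =o[𝓝 0]
      fun ξ => ‖ξ‖ ^ m := by
    refine (hM.sub (((integral_mul_exp_sub_Ppoly_isBigO hf hmom).mono le_top).trans_isLittleO
      (norm_pow_isLittleO_norm_pow m.lt_succ_self))).congr_left fun ξ => ?_
    rw [Ppoly_sub, Pi.sub_apply]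
    ring
  exact sub_eq_zero.1 (eq_zero_of_Ppoly_eq_zero (Ppoly_eq_zero_of_isLittleO hdiff) hβ)

end MomentExpansion

section DensityMoments

variable {d : ℕ} {ν : Measure (Vd d)} {ψ : Vd d → ℂ}

lemma ftc_withDensityᵥ (hψ : Integrable ψ ν) (ξ : Vd d) :
    ftc (ν.withDensityᵥ ψ) ξ = ∫ x, ψ x * Complex.exp (-Complex.I * (inner ℝ x ξ : ℝ)) ∂ν := by
  simp only [ftc, sum_mul_eq_inner]
  exact cint_withDensityᵥ hψ (Continuous.aestronglyMeasurable (by fun_prop))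
    (integrable_mul_exp_neg_I_mul_inner hψ ξ)

lemma lintegral_ctv_withDensityᵥ_lt_top (hψ : Integrable ψ ν) {n : ℕ}
    (hn : Integrable (fun x => ‖x‖ ^ n * ‖ψ x‖) ν) :
    ∫⁻ x, (‖x‖₊ : ℝ≥0∞) ^ n ∂ctv (ν.withDensityᵥ ψ) < ⊤ := by
  refine (lintegral_ctv_withDensityᵥ_le hψ (by fun_prop)).trans_lt
    (ENNReal.mul_lt_top ENNReal.ofNat_lt_top ?_)
  simpa [HasFiniteIntegral, enorm_mul, enorm_pow, mul_comm, enorm_eq_nnnorm] using hn.2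

lemma withDensityᵥ_mem_MomentSet (hψ : AEStronglyMeasurable ψ ν) {m : ℕ}
    (hmom : ∀ k ≤ m + 1, Integrable (fun x => ‖x‖ ^ k * ‖ψ x‖) ν) {M : (Fin d → ℕ) → ℂ}
    (hM : (fun ξ => ftc (ν.withDensityᵥ ψ) ξ - Ppoly d m M ξ) =o[𝓝 0] fun ξ => ‖ξ‖ ^ m) :
    ν.withDensityᵥ ψ ∈ MomentSet d m M := by
  have hinteg : Integrable ψ ν :=
    (integrable_norm_iff hψ).1 (by simpa using hmom 0 (Nat.zero_le _))
  refine ⟨lintegral_ctv_withDensityᵥ_lt_top hinteg (hmom m m.le_succ), fun β hβ => ?_⟩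
  rw [cint_withDensityᵥ hinteg (Continuous.aestronglyMeasurable (by fun_prop))
    (integrable_mul_prod_pow hψ β (hmom _ (hβ.trans m.le_succ)))]
  simp only [ftc_withDensityᵥ hinteg] at hM
  exact integral_mul_prod_pow_eq_of_isLittleO hψ hmom hM hβ

end DensityMoments

theorem stmt3_general (d m : ℕ) (hm : m ≠ 0) (M : (Fin d → ℕ) → ℂ) (δ : ℝ) (hδ : 0 < δ) :
    ∃ μ : ComplexMeasure (Vd d),
      (∀ A : Set (Vd d), MeasurableSet A →
        μ A = ∫ x in A, ((2 * Real.pi) ^ d)⁻¹ •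
          ∫ ξ : Vd d, phiFun d m M δ ξ *
            Complex.exp (Complex.I * ((∑ i, ξ i * x i : ℝ) : ℂ))) ∧
      ftc μ = phiFun d m M δ ∧
      μ ∈ MomentSet d m M := by
  obtain ⟨φ, hφ⟩ := exists_schwartzMap_eq_phiFun d hm M hδ
  let ψ := angularFourierInv φ
  have hinteg : Integrable ψ := ψ.integrable
  have hftc : ftc (volume.withDensityᵥ ψ) = phiFun d m M δ := by
    ext ξ
    rw [ftc_withDensityᵥ hinteg, integral_angularFourierInv_mul_exp, hφ]
  refine ⟨volume.withDensityᵥ ψ, fun A hA => ?_, hftc, ?_⟩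
  · rw [withDensityᵥ_apply hinteg hA]
    simp only [ψ, angularFourierInv_apply, finrank_euclideanSpace_fin, hφ, sum_mul_eq_inner]
  · refine withDensityᵥ_mem_MomentSet hinteg.1 (fun k _ => ψ.integrable_pow_mul volume k) ?_
    rw [hftc]
    exact phiFun_sub_Ppoly_isLittleO d hm M hδ.le

/-- For `m ≥ 2`, prescribed moments `M` and `δ > 0`, there is a complex Borel
measure `μ_{1/δ}` on `ℝ^d`, given by the density `φ̌_δ` (the inverse Fourier transform of `φ_δ`)
with respect to Lebesgue measure, whose Fourier transform equals `φ_δ`, which has finite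
absolute moment of order `m`, and whose moments of order `≤ m` are prescribed by `M`;
in particular `μ_{1/δ} ∈ 𝓜_m^M`. -/
theorem stmt3 (d m : ℕ) (hm : 2 ≤ m) (M : (Fin d → ℕ) → ℂ) (δ : ℝ) (hδ : 0 < δ) :
    ∃ μ : ComplexMeasure (Vd d),
      (∀ A : Set (Vd d), MeasurableSet A →
        μ A = ∫ x in A, ((2 * Real.pi) ^ d)⁻¹ •
          ∫ ξ : Vd d, phiFun d m M δ ξ *
            Complex.exp (Complex.I * ((∑ i, ξ i * x i : ℝ) : ℂ))) ∧
      ftc μ = phiFun d m M δ ∧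
      μ ∈ MomentSet d m M :=
  stmt3_general d m (by lia) M δ hδ

end
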